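/- The PTM representation of the two-fold tensor product of the single-qubit Clifford group on two qubits decomposes into exactly four inequivalent irreducible subrepresentations, indexed by w ∈ {0,1}², with projectors P_w = Σ |σ₁⊗σ₂⟩⟩⟨⟨σ₁⊗σ₂| where σ_i ranges over nontrivial normalized single-qubit Paulis if w_i = 1 and equals the normalized identity if w_i = 0. -/

import Mathlib

open Matrix
open scoped Kronecker

/-- The projector `P_w`, for `w ∈ {0,1}²`, onto the span of the (vectorized) normalized
two-qubit Pauli matrices `σ₁ ⊗ σ₂` where `σᵢ` is a nontrivial Pauli iff `wᵢ = 1`.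
Pauli labels are indexed by `Fin 4`, with `0` labelling the normalized identity `σ₀`. -/
noncomputable def pauliWeightProj (w : Bool × Bool) :
    Matrix (Fin 4 × Fin 4) (Fin 4 × Fin 4) ℝ :=
  Matrix.diagonal fun st =>
    if ((st.1 ≠ 0) ↔ w.1 = true) ∧ ((st.2 ≠ 0) ↔ w.2 = true) then 1 else 0

/-- The weight pattern of a two-qubit Pauli label: which tensor factors are nontrivial. -/
def pauliWeight (st : Fin 4 × Fin 4) : Bool × Bool :=
  (decide (st.1 ≠ 0), decide (st.2 ≠ 0))

lemma pauliWeightProj_eq_diagonal (w : Bool × Bool) :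
    pauliWeightProj w = Matrix.diagonal fun st => if pauliWeight st = w then 1 else 0 := by
  obtain ⟨a, b⟩ := w
  unfold pauliWeightProj pauliWeight
  congr 1
  ext st
  cases a <;> cases b <;> simp

lemma exists_pauliWeight_eq (w : Bool × Bool) : ∃ st, pauliWeight st = w := by
  revert w
  decide

lemma pauliWeightProj_mul_self (w : Bool × Bool) :
    pauliWeightProj w * pauliWeightProj w = pauliWeightProj w := by
  simp [pauliWeightProj_eq_diagonal]

lemma mem_range_pauliWeightProj {w : Bool × Bool} {x : Fin 4 × Fin 4 → ℝ} :
    x ∈ LinearMap.range (pauliWeightProj w).mulVecLin ↔ ∀ st, pauliWeight st ≠ w → x st = 0 := by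
  constructor
  · rintro ⟨y, rfl⟩ st hst
    simp [pauliWeightProj_eq_diagonal, Matrix.mulVec_diagonal, hst]
  · intro h
    refine ⟨x, funext fun st => ?_⟩
    by_cases hst : pauliWeight st = w
    · simp [pauliWeightProj_eq_diagonal, Matrix.mulVec_diagonal, hst]
    · simp [pauliWeightProj_eq_diagonal, Matrix.mulVec_diagonal, hst, h st hst]

/-- A matrix that is scalar on every weight sector acts on the sector `w` as `c w`. -/
lemma diagonal_pauliWeight_mulVec (c : Bool × Bool → ℝ) {w : Bool × Bool}
    {x : Fin 4 × Fin 4 → ℝ} (hx : x ∈ LinearMap.range (pauliWeightProj w).mulVecLin) :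
    (Matrix.diagonal fun st => c (pauliWeight st)) *ᵥ x = c w • x := by
  ext st
  by_cases hst : pauliWeight st = w
  · simp [Matrix.mulVec_diagonal, hst]
  · simp [Matrix.mulVec_diagonal, mem_range_pauliWeightProj.1 hx st hst]

section Orthogonal

variable {n : Type*} [Fintype n] [DecidableEq n]

/-- An orthogonal matrix fixing a basis vector vanishes off the induced block structure. -/
lemma apply_eq_zero_of_orthogonal_of_fix {M : Matrix n n ℝ} (hM : M * Mᵀ = 1) {k : n}
    (hfix : M *ᵥ Pi.single k 1 = Pi.single k 1) {i j : n} (hij : ¬(i = k ↔ j = k)) :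
    M i j = 0 := by
  have hcol (i : n) : M i k = (Pi.single k 1 : n → ℝ) i := by
    simpa using congrFun hfix i
  have hrow (j : n) : M k j = (Pi.single k 1 : n → ℝ) j := by
    have h : Mᵀ *ᵥ Pi.single k 1 = Pi.single k 1 := by
      conv_lhs => rw [← hfix, Matrix.mulVec_mulVec, mul_eq_one_comm.1 hM, Matrix.one_mulVec]
    simpa using congrFun h j
  by_cases hi : i = k
  · subst hi
    have hj : j ≠ i := fun h => hij (by simp [h])
    simp [hrow, hj]
  · have hj : j = k := by tauto
    subst hj
    simp [hcol, hi]

end Orthogonal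

section Commutant

variable {G : Type*} [Group G]

/-- The tensor square of a matrix representation, acting on vectorized matrices. -/
noncomputable def tensorSquareRep (φ : G →* Matrix (Fin 4) (Fin 4) ℝ) :
    Representation ℝ G (Fin 4 × Fin 4 → ℝ) where
  toFun g := Matrix.toLin' (φ g ⊗ₖ φ g)
  map_one' := by simp [Module.End.one_eq_id]
  map_mul' g h := by
    rw [map_mul, Matrix.mul_kronecker_mul, Matrix.toLin'_mul, Module.End.mul_eq_comp]

variable {φ : G →* Matrix (Fin 4) (Fin 4) ℝ}

lemma vec_mem_invariants_tensorSquareRep (horth : ∀ g, φ g * (φ g)ᵀ = 1)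
    {A : Matrix (Fin 4) (Fin 4) ℝ} (hA : ∀ g, φ g * A = A * φ g) :
    vec A ∈ (tensorSquareRep φ).invariants := by
  intro g
  simp [tensorSquareRep, Matrix.kronecker_mulVec_vec, hA, Matrix.mul_assoc, horth]

variable [Fintype G]

lemma finrank_invariants_tensorSquareRep
    (hdesign : (Fintype.card G : ℝ)⁻¹ * ∑ g : G, (Matrix.trace (φ g)) ^ 2 = 2) :
    Module.finrank ℝ (tensorSquareRep φ).invariants = 2 := by
  have hcard : (Nat.card G : ℝ) ≠ 0 := by simp
  have : Invertible (Nat.card G : ℝ) := invertibleOfNonzero hcard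
  have h := Representation.card_inv_mul_sum_char_eq_finrank (tensorSquareRep φ)
  have hchar (g : G) : (tensorSquareRep φ).character g = Matrix.trace (φ g) ^ 2 := by
    simp [Representation.character, tensorSquareRep, Matrix.trace_kronecker, sq]
  simp only [hchar, Nat.card_eq_fintype_card, hdesign] at h
  exact_mod_cast h.symm

/-- The commutant of an orthogonal representation fixing `e₀` with the 2-design property
consists of the matrices that are scalar on the identity and on the nontrivial Pauli labels. -/
lemma eq_diagonal_of_commute (horth : ∀ g, φ g * (φ g)ᵀ = 1)
    (hfix : ∀ g, (φ g).mulVec (Pi.single 0 1) = Pi.single 0 1)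
    (hdesign : (Fintype.card G : ℝ)⁻¹ * ∑ g : G, (Matrix.trace (φ g)) ^ 2 = 2)
    {A : Matrix (Fin 4) (Fin 4) ℝ} (hA : ∀ g, φ g * A = A * φ g) :
    ∃ c : Bool → ℝ, A = Matrix.diagonal fun i => c (decide (i ≠ 0)) := by
  let E : Matrix (Fin 4) (Fin 4) ℝ := Matrix.diagonal fun i => if i = 0 then 1 else 0
  have hE : ∀ g, φ g * E = E * φ g := by
    intro g
    ext i j
    by_cases hij : i = 0 ↔ j = 0
    · simp [E, hij]
    · simp [E, apply_eq_zero_of_orthogonal_of_fix (horth g) (hfix g) hij]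
  have hli : LinearIndependent ℝ ![vec (1 : Matrix (Fin 4) (Fin 4) ℝ), vec E] := by
    rw [LinearIndependent.pair_iff]
    intro s t hst
    have h₀ := congrFun hst (0, 0)
    have h₁ := congrFun hst (1, 1)
    simp [E, vec] at h₀ h₁
    exact ⟨h₁, by linarith⟩
  have hspan : Submodule.span ℝ (Set.range ![vec (1 : Matrix (Fin 4) (Fin 4) ℝ), vec E]) =
      (tensorSquareRep φ).invariants := by
    apply Submodule.eq_of_le_of_finrank_eq
    · rw [Submodule.span_le]
      rintro _ ⟨i, rfl⟩
      fin_cases i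
      · exact vec_mem_invariants_tensorSquareRep horth (A := 1) (by simp)
      · exact vec_mem_invariants_tensorSquareRep horth hE
    · rw [finrank_span_eq_card hli, finrank_invariants_tensorSquareRep hdesign]
      simp
  have hmem := vec_mem_invariants_tensorSquareRep horth hA
  rw [← hspan, Matrix.range_cons_cons_empty, Submodule.mem_span_pair] at hmem
  obtain ⟨a, b, hab⟩ := hmem
  rw [← vec_smul, ← vec_smul, ← vec_add, vec_inj] at hab
  refine ⟨fun t => if t then a else a + b, ?_⟩
  rw [← hab]
  ext i j
  by_cases hij : i = j
  · subst hij
    by_cases hi : i = 0 <;> simp [E, hi]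
  · simp [E, hij]

/-- The commutant of `(g, h) ↦ φ g ⊗ φ h` consists of the matrices that are scalar on each of
the four weight sectors. -/
lemma eq_diagonal_pauliWeight_of_commute (horth : ∀ g, φ g * (φ g)ᵀ = 1)
    (hfix : ∀ g, (φ g).mulVec (Pi.single 0 1) = Pi.single 0 1)
    (hdesign : (Fintype.card G : ℝ)⁻¹ * ∑ g : G, (Matrix.trace (φ g)) ^ 2 = 2)
    {X : Matrix (Fin 4 × Fin 4) (Fin 4 × Fin 4) ℝ}
    (hX : ∀ p : G × G, (φ p.1 ⊗ₖ φ p.2) * X = X * (φ p.1 ⊗ₖ φ p.2)) :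
    ∃ c : Bool × Bool → ℝ, X = Matrix.diagonal fun st => c (pauliWeight st) := by
  have hleft (b d : Fin 4) :
      ∃ c : Bool → ℝ, (Matrix.of fun i j => X (i, b) (j, d)) =
        Matrix.diagonal fun i => c (decide (i ≠ 0)) := by
    refine eq_diagonal_of_commute horth hfix hdesign fun g => ?_
    ext i j
    simpa [Matrix.mul_apply, Fintype.sum_prod_type, Matrix.one_apply] using
      congrFun₂ (hX (g, 1)) (i, b) (j, d)
  have hright (a c : Fin 4) :
      ∃ e : Bool → ℝ, (Matrix.of fun i j => X (a, i) (c, j)) =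
        Matrix.diagonal fun i => e (decide (i ≠ 0)) := by
    refine eq_diagonal_of_commute horth hfix hdesign fun g => ?_
    ext i j
    simpa [Matrix.mul_apply, Fintype.sum_prod_type, Matrix.one_apply] using
      congrFun₂ (hX (1, g)) (a, i) (c, j)
  choose l hl using hleft
  choose r hr using hright
  replace hl (i j b d : Fin 4) : X (i, b) (j, d) = if i = j then l b d (decide (i ≠ 0)) else 0 := by
    simpa [Matrix.diagonal_apply] using congrFun₂ (hl b d) i j
  replace hr (a c i j : Fin 4) : X (a, i) (c, j) = if i = j then r a c (decide (i ≠ 0)) else 0 := by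
    simpa [Matrix.diagonal_apply] using congrFun₂ (hr a c) i j
  let rep : Bool → Fin 4 := fun t => if t then 1 else 0
  have hrep (i : Fin 4) : decide (rep (decide (i ≠ 0)) ≠ 0) = decide (i ≠ 0) := by
    revert i
    decide
  refine ⟨fun w => X (rep w.1, rep w.2) (rep w.1, rep w.2), ?_⟩
  ext ⟨a, b⟩ ⟨c, d⟩
  by_cases hac : a = c
  · by_cases hbd : b = d
    · subst hac hbd
      rw [Matrix.diagonal_apply_eq]
      trans X (rep (decide (a ≠ 0)), b) (rep (decide (a ≠ 0)), b)
      · rw [hl, hl (rep _), if_pos rfl, if_pos rfl, hrep]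
      · simp only [pauliWeight]
        rw [hr, hr _ _ (rep _), if_pos rfl, if_pos rfl, hrep]
    · rw [hr, if_neg hbd, Matrix.diagonal_apply_ne _ (by simp [hbd])]
  · rw [hl, if_neg hac, Matrix.diagonal_apply_ne _ (by simp [hac])]

end Commutant

/-- The sum of all conjugates of a matrix under a group of orthogonal matrices commutes with
the group. -/
lemma commute_sum_conj {H n : Type*} [Group H] [Fintype H] [Fintype n] [DecidableEq n]
    {ψ : H →* Matrix n n ℝ} (hψ : ∀ p, ψ p * (ψ p)ᵀ = 1) (A : Matrix n n ℝ) (q : H) :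
    ψ q * (∑ p, ψ p * A * (ψ p)ᵀ) = (∑ p, ψ p * A * (ψ p)ᵀ) * ψ q := by
  have h : ψ q * (∑ p, ψ p * A * (ψ p)ᵀ) * (ψ q)ᵀ = ∑ p, ψ p * A * (ψ p)ᵀ := by
    rw [Finset.mul_sum, Finset.sum_mul, ← (Group.mulLeft_bijective q).sum_comp fun p => ψ p * A * (ψ p)ᵀ]
    simp only [map_mul, Matrix.transpose_mul, Matrix.mul_assoc]
  conv_rhs => rw [← h, Matrix.mul_assoc, mul_eq_one_comm.1 (hψ q), Matrix.mul_one]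

/-- An invariant subspace of an orthogonal representation is the image of an intertwiner acting on
it as a nonzero scalar. -/
lemma exists_intertwiner_of_invariant {H n : Type*} [Group H] [Fintype H] [Fintype n]
    [DecidableEq n] {ψ : H →* Matrix n n ℝ} (hψ : ∀ p, ψ p * (ψ p)ᵀ = 1)
    {U : Submodule ℝ (n → ℝ)} (hU : ∀ p, U.map (ψ p).mulVecLin ≤ U) :
    ∃ X : Matrix n n ℝ, (∀ p, ψ p * X = X * ψ p) ∧ (∀ x, X *ᵥ x ∈ U) ∧
      ∀ u ∈ U, X *ᵥ u = (Fintype.card H : ℝ) • u := by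
  obtain ⟨f, hf⟩ := U.subtype.exists_leftInverse_of_injective U.ker_subtype
  let A : Matrix n n ℝ := LinearMap.toMatrix' (U.subtype ∘ₗ f)
  have hA (x : n → ℝ) : A *ᵥ x = f x := by
    simp [A, LinearMap.toMatrix'_mulVec]
  have hψU (p : H) {u : n → ℝ} (hu : u ∈ U) : ψ p *ᵥ u ∈ U :=
    hU p (Submodule.mem_map_of_mem hu)
  have htr (p : H) : (ψ p)ᵀ = ψ p⁻¹ := by
    have h : ψ p⁻¹ * ψ p = 1 := by rw [← map_mul]; simp
    exact (left_inv_eq_right_inv h (hψ p)).symm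
  refine ⟨_, commute_sum_conj hψ A, fun x => ?_, fun u hu => ?_⟩
  · rw [Matrix.sum_mulVec]
    refine U.sum_mem fun p _ => ?_
    rw [← Matrix.mulVec_mulVec, ← Matrix.mulVec_mulVec, hA]
    exact hψU p (f _).2
  · have h (p : H) : (ψ p * A * (ψ p)ᵀ) *ᵥ u = u := by
      have hfix := LinearMap.congr_fun hf ⟨(ψ p)ᵀ *ᵥ u, htr p ▸ hψU p⁻¹ hu⟩
      simp only [LinearMap.comp_apply, Submodule.subtype_apply, LinearMap.id_apply] at hfix
      rw [← Matrix.mulVec_mulVec, ← Matrix.mulVec_mulVec, hA, hfix, Matrix.mulVec_mulVec, hψ,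
        Matrix.one_mulVec]
    simp [Matrix.sum_mulVec, h, ← Nat.cast_smul_eq_nsmul ℝ, -nsmul_eq_mul]

/-- The representation `(g, h) ↦ φ g ⊗ φ h`. -/
noncomputable def kroneckerHom {G : Type*} [Group G] (φ : G →* Matrix (Fin 4) (Fin 4) ℝ) :
    G × G →* Matrix (Fin 4 × Fin 4) (Fin 4 × Fin 4) ℝ where
  toFun p := φ p.1 ⊗ₖ φ p.2
  map_one' := by simp
  map_mul' p q := by simp [Matrix.mul_kronecker_mul]


/-- Let `φ` be the 4-dimensional PTM representation of the single-qubit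
Clifford group (abstractly: any finite group `G` with an orthogonal representation `φ`
fixing the identity-Pauli direction `e₀` and satisfying the unitary-2-design property
`𝔼_g (tr φ g)² = 2`).  Then the PTM representation `ψ (g,h) = φ g ⊗ φ h` of the
two-fold tensor product of the single-qubit Clifford group on two qubits decomposes into
exactly the four subrepresentations projected onto by `P_w`, `w ∈ {0,1}²`: the `P_w` are
orthogonal projectors summing to the identity, invariant under `ψ`, each carrying an
irreducible subrepresentation, and the four subrepresentations are pairwise
inequivalent. -/
theorem stmt_15 {G : Type*} [Group G] [Fintype G]
    (φ : G →* Matrix (Fin 4) (Fin 4) ℝ)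
    (horth : ∀ g, φ g * (φ g)ᵀ = 1)
    (hfix : ∀ g, (φ g).mulVec (Pi.single 0 1) = Pi.single 0 1)
    (hdesign : (Fintype.card G : ℝ)⁻¹ * ∑ g : G, (Matrix.trace (φ g)) ^ 2 = 2) :
    (∑ w : Bool × Bool, pauliWeightProj w = 1) ∧
    (∀ w, pauliWeightProj w * pauliWeightProj w = pauliWeightProj w) ∧
    (∀ w, (pauliWeightProj w)ᵀ = pauliWeightProj w) ∧
    (∀ w w', w ≠ w' → pauliWeightProj w * pauliWeightProj w' = 0) ∧
    (∀ w (p : G × G), (φ p.1 ⊗ₖ φ p.2) * pauliWeightProj w =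
      pauliWeightProj w * (φ p.1 ⊗ₖ φ p.2)) ∧
    (∀ w (U : Submodule ℝ (Fin 4 × Fin 4 → ℝ)),
      U ≤ LinearMap.range (pauliWeightProj w).mulVecLin →
      (∀ p : G × G, U.map ((φ p.1 ⊗ₖ φ p.2)).mulVecLin ≤ U) →
      U = ⊥ ∨ U = LinearMap.range (pauliWeightProj w).mulVecLin) ∧
    (∀ w w', w ≠ w' →
      ¬∃ f : (Fin 4 × Fin 4 → ℝ) →ₗ[ℝ] (Fin 4 × Fin 4 → ℝ),
        Set.InjOn f (LinearMap.range (pauliWeightProj w).mulVecLin) ∧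
        f '' (LinearMap.range (pauliWeightProj w).mulVecLin) =
          (LinearMap.range (pauliWeightProj w').mulVecLin : Set (Fin 4 × Fin 4 → ℝ)) ∧
        ∀ (p : G × G), ∀ x ∈ LinearMap.range (pauliWeightProj w).mulVecLin,
          f ((φ p.1 ⊗ₖ φ p.2).mulVec x) = (φ p.1 ⊗ₖ φ p.2).mulVec (f x)) := by
  have hcomm (w : Bool × Bool) (p : G × G) : (φ p.1 ⊗ₖ φ p.2) * pauliWeightProj w =
      pauliWeightProj w * (φ p.1 ⊗ₖ φ p.2) := by
    rw [pauliWeightProj_eq_diagonal]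
    ext ⟨a, b⟩ ⟨c, d⟩
    rw [Matrix.mul_diagonal, Matrix.diagonal_mul, Matrix.kronecker_apply]
    by_cases hac : a = 0 ↔ c = 0
    · by_cases hbd : b = 0 ↔ d = 0
      · simp [pauliWeight, hac, hbd, mul_comm]
      · simp [apply_eq_zero_of_orthogonal_of_fix (horth p.2) (hfix p.2) hbd]
    · simp [apply_eq_zero_of_orthogonal_of_fix (horth p.1) (hfix p.1) hac]
  refine ⟨?_, pauliWeightProj_mul_self, ?_, ?_, hcomm, ?_, ?_⟩
  · ext st st'
    by_cases h : st = st'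
    · subst h
      simp [Matrix.sum_apply, pauliWeightProj_eq_diagonal]
    · simp [Matrix.sum_apply, pauliWeightProj_eq_diagonal, h]
  · intro w
    simp [pauliWeightProj]
  · intro w w' hw
    rw [pauliWeightProj_eq_diagonal, pauliWeightProj_eq_diagonal, Matrix.diagonal_mul_diagonal,
      Matrix.diagonal_eq_zero]
    ext st
    by_cases h : pauliWeight st = w
    · simp [h, hw]
    · simp [h]
  · intro w U hUw hU
    have hψ (p : G × G) : kroneckerHom φ p * (kroneckerHom φ p)ᵀ = 1 := by
      change (φ p.1 ⊗ₖ φ p.2) * (φ p.1 ⊗ₖ φ p.2)ᵀ = 1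
      rw [← Matrix.kroneckerMap_transpose, ← Matrix.mul_kronecker_mul, horth, horth,
        Matrix.one_kronecker_one]
    obtain ⟨X, hX, hXU, hXu⟩ := exists_intertwiner_of_invariant hψ hU
    obtain ⟨c, rfl⟩ := eq_diagonal_pauliWeight_of_commute horth hfix hdesign hX
    refine or_iff_not_imp_left.2 fun hne => le_antisymm hUw fun x hx => ?_
    obtain ⟨u, hu, hu0⟩ := U.exists_mem_ne_zero_of_ne_bot hne
    have hc : c w = Fintype.card (G × G) := by
      refine smul_left_injective ℝ hu0 ?_
      simpa only [diagonal_pauliWeight_mulVec c (hUw hu)] using hXu u hu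
    have hc0 : c w ≠ 0 := by simp [hc]
    have hxU := hXU x
    rw [diagonal_pauliWeight_mulVec c hx] at hxU
    exact (U.smul_mem_iff hc0).1 hxU
  · rintro w w' hw ⟨f, hinj, himage, hf⟩
    let F := LinearMap.toMatrix' f
    have hF (x : Fin 4 × Fin 4 → ℝ) : F *ᵥ x = f x := LinearMap.toMatrix'_mulVec f x
    have hmem (x : Fin 4 × Fin 4 → ℝ) :
        pauliWeightProj w *ᵥ x ∈ LinearMap.range (pauliWeightProj w).mulVecLin := ⟨x, rfl⟩
    have hX (p : G × G) : (φ p.1 ⊗ₖ φ p.2) * (F * pauliWeightProj w) =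
        F * pauliWeightProj w * (φ p.1 ⊗ₖ φ p.2) := by
      refine Matrix.ext_of_mulVec_single fun i => ?_
      rw [Matrix.mul_assoc F, ← hcomm]
      simp only [← Matrix.mulVec_mulVec, hF]
      exact (hf p _ (hmem _)).symm
    obtain ⟨c, hc⟩ := eq_diagonal_pauliWeight_of_commute horth hfix hdesign hX
    obtain ⟨st, hst⟩ := exists_pauliWeight_eq w
    let e : Fin 4 × Fin 4 → ℝ := Pi.single st 1
    have he : e ∈ LinearMap.range (pauliWeightProj w).mulVecLin := by
      refine mem_range_pauliWeightProj.2 fun st' hst' => Pi.single_eq_of_ne ?_ _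
      rintro rfl
      exact hst' hst
    have hfe : f e = c w • e := by
      have hPe : pauliWeightProj w *ᵥ e = e := by
        obtain ⟨y, hy⟩ := he
        simp [← hy, Matrix.mulVec_mulVec, pauliWeightProj_mul_self]
      rw [← diagonal_pauliWeight_mulVec c he, ← hc, ← Matrix.mulVec_mulVec, hF, hPe]
    have hfe' : f e ∈ LinearMap.range (pauliWeightProj w').mulVecLin := by
      rw [← SetLike.mem_coe, ← himage]
      exact Set.mem_image_of_mem f he
    have hcw : c w = 0 := by
      simpa [hfe, e] using mem_range_pauliWeightProj.1 hfe' st (hst ▸ hw)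
    have he0 : e = 0 := hinj he (zero_mem _) (by simp [hfe, hcw])
    simpa [e] using congrFun he0 st
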